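/- arXiv:2410.11383 — 2 statements merged into one kernel-verified Lean document; each statement's English description precedes it below -/
import Mathlib

section
/- For every sequence q on the network N, every δ > 0 and every x ∈ B_δ(q), there exists s₀ ≥ 0 such that φ s x ∈ B_δ(q) for all s ≥ s₀; in other words, the asymptotic δ-basin B_δ(q) eventually absorbs the forward trajectory of each of its points. (This makes precise the paper's assertion in Section 3.1 that the asymptotic basin is forward invariant.) -/
open MeasureTheory Filter Topology Metric Set

noncomputable section

/-- The shift operator `Σ` on sequences: `(Σ q) k = q (k+1)`. -/
def shiftSeq {A : Type*} (q : ℕ → A) : ℕ → A := fun k => q (k + 1)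

/-- A sequence is preperiodic if there exist `K ≥ 1` and `K₀ ≥ 0` with
`q (k + K) = q k` for all `k > K₀`. -/
def PreperiodicSeq {A : Type*} (q : ℕ → A) : Prop :=
  ∃ K : ℕ, 1 ≤ K ∧ ∃ K₀ : ℕ, ∀ k > K₀, q (k + K) = q k

/-- Euclidean space `ℝ^d`. -/
abbrev Es (d : ℕ) := EuclideanSpace ℝ (Fin d)

/-- The heteroclinic network as a subset of phase space:
`N = (⋃ p, {ξ p}) ∪ (⋃ j, γ j)`. -/
def netSet {d P Q : ℕ} (ξ : Fin P → Es d) (γ : Fin Q → Set (Es d)) : Set (Es d) :=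
  (⋃ p, {ξ p}) ∪ ⋃ j, γ j

/-- `x` follows the sequence `q` within `UN`: there are times
`0 ≤ t 0 < t' 0 < t 1 < t' 1 < ⋯` such that the trajectory of `x` stays in `UN`
after time `t 0`, visits the neighborhoods `U (a (q k))` and `V (q k)` at times
`t k` and `t' k`, and between `t' k` and `t' (k+1)` avoids all neighborhoods
`U p` with `p ≠ b (q k)`. -/
def FollowsSeq {d P Q : ℕ} (φ : ℝ → Es d → Es d)
    (U : Fin P → Set (Es d)) (V : Fin Q → Set (Es d))
    (a b : Fin Q → Fin P) (UN : Set (Es d)) (q : ℕ → Fin Q) (x : Es d) : Prop :=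
  ∃ t t' : ℕ → ℝ,
    0 ≤ t 0 ∧ (∀ k, t k < t' k) ∧ (∀ k, t' k < t (k + 1)) ∧
    (∀ s, t 0 < s → φ s x ∈ UN) ∧
    (∀ k, φ (t k) x ∈ U (a (q k))) ∧
    (∀ k, φ (t' k) x ∈ V (q k)) ∧
    (∀ k, ∀ s, t' k < s → s < t' (k + 1) → ∀ p, p ≠ b (q k) → φ s x ∉ U p)

/-- The `δ`-stable set `S_δ(q)` of a sequence `q`. -/
def stableSet {d P Q : ℕ} (φ : ℝ → Es d → Es d) (ξ : Fin P → Es d) (γ : Fin Q → Set (Es d))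
    (U : Fin P → Set (Es d)) (V : Fin Q → Set (Es d)) (a b : Fin Q → Fin P)
    (δ : ℝ) (q : ℕ → Fin Q) : Set (Es d) :=
  {x ∈ thickening δ (netSet ξ γ) |
    FollowsSeq φ U V a b (thickening δ (netSet ξ γ)) q x}

/-- The set `A_δ(q)` of points attracted to `N` along `q`. -/
def attrSet {d P Q : ℕ} (φ : ℝ → Es d → Es d) (ξ : Fin P → Es d) (γ : Fin Q → Set (Es d))
    (U : Fin P → Set (Es d)) (V : Fin Q → Set (Es d)) (a b : Fin Q → Fin P)
    (δ : ℝ) (q : ℕ → Fin Q) : Set (Es d) :=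
  {x ∈ stableSet φ ξ γ U V a b δ q |
    Tendsto (fun t => infDist (φ t x) (netSet ξ γ)) atTop (𝓝 0)}

/-- The asymptotic `δ`-basin of attraction `B_δ(q) = ⋃ k, A_δ(Σ^k q)`. -/
def basin {d P Q : ℕ} (φ : ℝ → Es d → Es d) (ξ : Fin P → Es d) (γ : Fin Q → Set (Es d))
    (U : Fin P → Set (Es d)) (V : Fin Q → Set (Es d)) (a b : Fin Q → Fin P)
    (δ : ℝ) (q : ℕ → Fin Q) : Set (Es d) :=
  ⋃ k : ℕ, attrSet φ ξ γ U V a b δ (shiftSeq^[k] q)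

/-- The difference set `D_δ^(k)(q) = A_δ(Σ^k q) \ A_δ(Σ^(k-1) q)` (for `k ≥ 1`). -/
def Dset {d P Q : ℕ} (φ : ℝ → Es d → Es d) (ξ : Fin P → Es d) (γ : Fin Q → Set (Es d))
    (U : Fin P → Set (Es d)) (V : Fin Q → Set (Es d)) (a b : Fin Q → Fin P)
    (δ : ℝ) (q : ℕ → Fin Q) (k : ℕ) : Set (Es d) :=
  attrSet φ ξ γ U V a b δ (shiftSeq^[k] q) \
    attrSet φ ξ γ U V a b δ (shiftSeq^[k - 1] q)

/-- Fragmentary asymptotic stability of a sequence: `μ(B_δ(q)) > 0` for every `δ > 0`. -/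
def FAS {d P Q : ℕ} (φ : ℝ → Es d → Es d) (ξ : Fin P → Es d) (γ : Fin Q → Set (Es d))
    (U : Fin P → Set (Es d)) (V : Fin Q → Set (Es d)) (a b : Fin Q → Fin P)
    (q : ℕ → Fin Q) : Prop :=
  ∀ δ : ℝ, 0 < δ → 0 < volume (basin φ ξ γ U V a b δ q)

theorem shiftSeq_iterate_apply {A : Type*} (q : ℕ → A) (m k : ℕ) :
    shiftSeq^[m] q k = q (k + m) := by
  induction m generalizing k with
  | zero => rfl
  | succ m ih =>
    rw [Function.iterate_succ_apply', shiftSeq, ih]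
    congr 1
    omega

/-- Interlaced times at which a continuous curve visits two disjoint closed sets are unbounded. -/
theorem exists_le_of_visits_disjoint_closed {X : Type*} [TopologicalSpace X] {f : ℝ → X}
    (hf : Continuous f) {C D : Set X} (hC : IsClosed C) (hD : IsClosed D) (hCD : Disjoint C D)
    {t t' : ℕ → ℝ} (htt' : ∀ k, t k < t' k) (ht't : ∀ k, t' k < t (k + 1))
    (htC : ∀ k, f (t k) ∈ C) (htD : ∀ k, f (t' k) ∈ D) (s : ℝ) : ∃ m, s ≤ t m := by
  by_contra! hlt
  have hmono : Monotone t := monotone_nat_of_le_succ fun k => ((htt' k).trans (ht't k)).le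
  obtain ⟨T, hT⟩ : ∃ T, Tendsto t atTop (𝓝 T) :=
    ⟨_, tendsto_atTop_ciSup hmono ⟨s, by rintro _ ⟨k, rfl⟩; exact (hlt k).le⟩⟩
  have hT' : Tendsto t' atTop (𝓝 T) :=
    tendsto_of_tendsto_of_tendsto_of_le_of_le hT ((tendsto_add_atTop_iff_nat 1).2 hT)
      (fun k => (htt' k).le) (fun k => (ht't k).le)
  exact hCD.le_bot
    ⟨hC.mem_of_tendsto ((hf.tendsto T).comp hT) (Eventually.of_forall htC),
      hD.mem_of_tendsto ((hf.tendsto T).comp hT') (Eventually.of_forall htD)⟩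

/-- The asymptotic `δ`-basin eventually absorbs the forward trajectory of each of its points. -/
theorem basin_eventually_forward_invariant
    {d P Q : ℕ} (hd : 1 ≤ d) (hP : 1 ≤ P) (hQ : 1 ≤ Q)
    (φ : ℝ → Es d → Es d)
    (hφcont : Continuous fun pr : ℝ × Es d => φ pr.1 pr.2)
    (hφ0 : ∀ x, φ 0 x = x)
    (hφadd : ∀ s t x, φ (s + t) x = φ s (φ t x))
    (ξ : Fin P → Es d) (hξinj : Function.Injective ξ)
    (hfix : ∀ t p, φ t (ξ p) = ξ p)
    (γ : Fin Q → Set (Es d)) (hγne : ∀ j, (γ j).Nonempty)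
    (hγinv : ∀ j t x, x ∈ γ j → φ t x ∈ γ j)
    (a b : Fin Q → Fin P)
    (hω : ∀ j, ∀ x ∈ γ j, Tendsto (fun t => φ t x) atTop (𝓝 (ξ (b j))))
    (hα : ∀ j, ∀ x ∈ γ j, Tendsto (fun t => φ t x) atBot (𝓝 (ξ (a j))))
    (ζ : Fin Q → Es d) (hζ : ∀ j, ζ j ∈ γ j)
    (U : Fin P → Set (Es d)) (hUopen : ∀ p, IsOpen (U p)) (hUmem : ∀ p, ξ p ∈ U p)
    (V : Fin Q → Set (Es d)) (hVopen : ∀ j, IsOpen (V j)) (hVmem : ∀ j, ζ j ∈ V j)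
    (hUU : ∀ p p', p ≠ p' → Disjoint (closure (U p)) (closure (U p')))
    (hVV : ∀ j j', j ≠ j' → Disjoint (closure (V j)) (closure (V j')))
    (hUV : ∀ p j, Disjoint (closure (U p)) (closure (V j)))
    (q : ℕ → Fin Q) (hq : ∀ k, b (q k) = a (q (k + 1))) :
    ∀ δ : ℝ, 0 < δ → ∀ x ∈ basin φ ξ γ U V a b δ q,
      ∃ s₀ : ℝ, 0 ≤ s₀ ∧ ∀ s : ℝ, s₀ ≤ s → φ s x ∈ basin φ ξ γ U V a b δ q := by
  intro δ _ x hx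
  obtain ⟨n, ⟨_, t, t', ht0, htt', ht't, hUN, htU, htV, havoid⟩, hlim⟩ := mem_iUnion.1 hx
  have hmono : Monotone t := monotone_nat_of_le_succ fun k => ((htt' k).trans (ht't k)).le
  refine ⟨t 0 + 1, by linarith, fun s hs => ?_⟩
  have hdisj : Disjoint (⋃ p, closure (U p)) (⋃ j, closure (V j)) := by
    simp only [disjoint_iUnion_left, disjoint_iUnion_right]
    exact fun j p => hUV p j
  obtain ⟨m, hm⟩ := exists_le_of_visits_disjoint_closed (f := fun r => φ r x)
    (hφcont.comp (continuous_id.prodMk continuous_const))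
    (isClosed_iUnion_of_finite fun _ => isClosed_closure)
    (isClosed_iUnion_of_finite fun _ => isClosed_closure) hdisj htt' ht't
    (fun k => mem_iUnion.2 ⟨_, subset_closure (htU k)⟩)
    (fun k => mem_iUnion.2 ⟨_, subset_closure (htV k)⟩) s
  have hshift (k : ℕ) : shiftSeq^[m + n] q k = shiftSeq^[n] q (k + m) := by
    simp only [shiftSeq_iterate_apply, add_assoc]
  refine mem_iUnion.2 ⟨m + n, ⟨hUN s (by linarith), fun k => t (k + m) - s,
    fun k => t' (k + m) - s, ?_, fun k => ?_, fun k => ?_, fun r hr => ?_, fun k => ?_,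
    fun k => ?_, fun k r hr hr' p hp => ?_⟩, ?_⟩
  · simpa using hm
  · exact sub_lt_sub_right (htt' _) s
  · have := ht't (k + m)
    rw [add_right_comm] at this
    exact sub_lt_sub_right this s
  · rw [← hφadd]
    have := hmono (Nat.zero_le (0 + m))
    exact hUN _ (by linarith)
  · rw [← hφadd, sub_add_cancel, hshift]
    exact htU _
  · rw [← hφadd, sub_add_cancel, hshift]
    exact htV _
  · rw [hshift] at hp
    beta_reduce at hr hr'
    rw [add_right_comm] at hr'
    rw [← hφadd]
    exact havoid (k + m) _ (by linarith) (by linarith) p hp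
  · simpa only [hφadd, Function.comp_def, id] using
      hlim.comp (tendsto_atTop_add_const_right _ s tendsto_id)
end
end

section
/- Let q be a sequence on the network N such that Σ^m q = Σ^(m+n) q for some m ∈ ℕ and n ≥ 1. Then for every δ > 0 and every k > m, the difference set D_δ^(k)(q) is empty. (This is the key step in the proof of Proposition 3.2 of the paper.) -/
open MeasureTheory Filter Topology Metric Set

noncomputable section

/-- A point following `q` also follows the shifted sequence `Σ q`. -/
theorem FollowsSeq.shiftSeq {d P Q : ℕ} {φ : ℝ → Es d → Es d}
    {U : Fin P → Set (Es d)} {V : Fin Q → Set (Es d)}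
    {a b : Fin Q → Fin P} {UN : Set (Es d)} {q : ℕ → Fin Q} {x : Es d}
    (h : FollowsSeq φ U V a b UN q x) : FollowsSeq φ U V a b UN (shiftSeq q) x := by
  obtain ⟨t, t', h0, htt', ht't, hUN, hU, hV, havoid⟩ := h
  have h01 : t 0 < t 1 := (htt' 0).trans (ht't 0)
  exact ⟨fun k => t (k + 1), fun k => t' (k + 1), h0.trans h01.le, fun k => htt' (k + 1),
    fun k => ht't (k + 1), fun s hs => hUN s (h01.trans hs), fun k => hU (k + 1),
    fun k => hV (k + 1), fun k => havoid (k + 1)⟩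

theorem attrSet_subset_attrSet_shiftSeq {d P Q : ℕ} (φ : ℝ → Es d → Es d)
    (ξ : Fin P → Es d) (γ : Fin Q → Set (Es d))
    (U : Fin P → Set (Es d)) (V : Fin Q → Set (Es d)) (a b : Fin Q → Fin P)
    (δ : ℝ) (q : ℕ → Fin Q) :
    attrSet φ ξ γ U V a b δ q ⊆ attrSet φ ξ γ U V a b δ (shiftSeq q) :=
  fun _ hx => ⟨⟨hx.1.1, hx.1.2.shiftSeq⟩, hx.2⟩

/-- The sets `A_δ(Σ^k q)` increase with `k`. -/
theorem monotone_attrSet_iterate_shiftSeq {d P Q : ℕ} (φ : ℝ → Es d → Es d)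
    (ξ : Fin P → Es d) (γ : Fin Q → Set (Es d))
    (U : Fin P → Set (Es d)) (V : Fin Q → Set (Es d)) (a b : Fin Q → Fin P)
    (δ : ℝ) (q : ℕ → Fin Q) :
    Monotone fun k => attrSet φ ξ γ U V a b δ (shiftSeq^[k] q) := by
  refine monotone_nat_of_le_succ fun k => ?_
  rw [Function.iterate_succ_apply']
  exact attrSet_subset_attrSet_shiftSeq φ ξ γ U V a b δ _

theorem iterate_eq_iterate_add_of_le {A : Type*} {f : A → A} {x : A} {m n k : ℕ}
    (h : f^[m] x = f^[m + n] x) (hk : m ≤ k) : f^[k] x = f^[k + n] x := by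
  obtain ⟨l, rfl⟩ := Nat.exists_eq_add_of_le' hk
  rw [Function.iterate_add_apply, h, ← Function.iterate_add_apply, add_assoc]

/-- Key step of Proposition 3.2: if `Σ^m q = Σ^(m+n) q` with `n ≥ 1`, then `D_δ^(k)(q) = ∅` for all `δ > 0` and all `k > m`. -/
theorem Dset_empty_of_shift_eq
    {d P Q : ℕ} (hd : 1 ≤ d) (hP : 1 ≤ P) (hQ : 1 ≤ Q)
    (φ : ℝ → Es d → Es d)
    (hφcont : Continuous fun pr : ℝ × Es d => φ pr.1 pr.2)
    (hφ0 : ∀ x, φ 0 x = x)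
    (hφadd : ∀ s t x, φ (s + t) x = φ s (φ t x))
    (ξ : Fin P → Es d) (hξinj : Function.Injective ξ)
    (hfix : ∀ t p, φ t (ξ p) = ξ p)
    (γ : Fin Q → Set (Es d)) (hγne : ∀ j, (γ j).Nonempty)
    (hγinv : ∀ j t x, x ∈ γ j → φ t x ∈ γ j)
    (a b : Fin Q → Fin P)
    (hω : ∀ j, ∀ x ∈ γ j, Tendsto (fun t => φ t x) atTop (𝓝 (ξ (b j))))
    (hα : ∀ j, ∀ x ∈ γ j, Tendsto (fun t => φ t x) atBot (𝓝 (ξ (a j))))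
    (ζ : Fin Q → Es d) (hζ : ∀ j, ζ j ∈ γ j)
    (U : Fin P → Set (Es d)) (hUopen : ∀ p, IsOpen (U p)) (hUmem : ∀ p, ξ p ∈ U p)
    (V : Fin Q → Set (Es d)) (hVopen : ∀ j, IsOpen (V j)) (hVmem : ∀ j, ζ j ∈ V j)
    (hUU : ∀ p p', p ≠ p' → Disjoint (closure (U p)) (closure (U p')))
    (hVV : ∀ j j', j ≠ j' → Disjoint (closure (V j)) (closure (V j')))
    (hUV : ∀ p j, Disjoint (closure (U p)) (closure (V j)))
    (q : ℕ → Fin Q) (hq : ∀ k, b (q k) = a (q (k + 1)))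
    (m n : ℕ) (hn : 1 ≤ n) (hper : shiftSeq^[m] q = shiftSeq^[m + n] q) :
    ∀ δ : ℝ, 0 < δ → ∀ k : ℕ, m < k → Dset φ ξ γ U V a b δ q k = ∅ := by
  intro δ _ k hk
  rw [Dset, sdiff_eq_empty, iterate_eq_iterate_add_of_le hper (Nat.le_sub_one_of_lt hk)]
  exact monotone_attrSet_iterate_shiftSeq φ ξ γ U V a b δ q (by omega)
end
end
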